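/- arXiv:2401.02381 — 3 statements merged into one kernel-verified Lean document; each statement's English description precedes it below -/
import Mathlib

section
/- The sum-of-absolute-error cost SAE is 2-partition ordered minimizable: for every finite multiset Ω of reals and every partition of Ω into two nonempty multisets A, B there exist pairwise ordered multisets L, R with L + R = Ω, whose multiset of cardinalities {|L|,|R|} equals {|A|,|B|}, and with SAE(L) + SAE(R) ≤ SAE(A) + SAE(B). -/
/-- Two multisets of reals are pairwise ordered iff every element of one is
less than or equal to every element of the other. -/
def PairwiseOrdered (A B : Multiset ℝ) : Prop :=
  (∀ a ∈ A, ∀ b ∈ B, a ≤ b) ∨ (∀ a ∈ A, ∀ b ∈ B, b ≤ a)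

/-- Sum of absolute error: `SAE(X) = min_{m∈ℝ} Σ_{x∈X} |x − m|`
(the minimum is attained at a median of `X`). -/
noncomputable def SAE (X : Multiset ℝ) : ℝ :=
  sInf (Set.range fun m : ℝ => (X.map (fun x => |x - m|)).sum)

/-!
Let `p` and `q` be minimizers for `SAE A` and `SAE B`; by symmetry `p ≤ q`. Let `L` consist of the
`|A|` smallest elements of `A + B` and `R` of the others. For `p ≤ q` the function
`x ↦ |x - p| - |x - q|` is monotone, so serving the smallest elements from `p` and the others from
`q` costs at most as much as serving `A` from `p` and `B` from `q`. The former cost bounds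
`SAE L + SAE R` and the latter is `SAE A + SAE B`.
-/

section Exchange

variable {α : Type*}

lemma exists_add_eq_and_card_eq_and_forall_le [LinearOrder α] (s : Multiset α) {k : ℕ}
    (hk : k ≤ s.card) :
    ∃ t u : Multiset α, t + u = s ∧ t.card = k ∧ ∀ a ∈ t, ∀ b ∈ u, a ≤ b := by
  have sorted : (s.sort.take k ++ s.sort.drop k).Pairwise (· ≤ ·) := by
    simpa only [List.take_append_drop] using s.pairwise_sort (· ≤ ·)
  refine ⟨↑(s.sort.take k), ↑(s.sort.drop k), ?_, ?_, ?_⟩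
  · rw [Multiset.coe_add, List.take_append_drop, Multiset.sort_eq]
  · simpa using hk
  · simpa only [Multiset.mem_coe] using (List.pairwise_append.1 sorted).2.2

lemma rel_of_le_add_of_card_eq {r : α → α → Prop} [Std.Refl r] {s t u : Multiset α}
    (hs : s ≤ t + u) (hcard : t.card = s.card) (hr : ∀ a ∈ t, ∀ b ∈ u, r a b) :
    Multiset.Rel r t s := by
  classical
  have ht_eq : t - s + t ∩ s = t := Multiset.sub_add_inter t s
  have hs_eq : s - t + t ∩ s = s := by rw [Multiset.inter_comm, Multiset.sub_add_inter]
  have hsub_le : s - t ≤ u := tsub_le_iff_left.2 hs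
  have hcard_sub : (t - s).card = (s - t).card := by
    have ht_card := congrArg Multiset.card ht_eq
    have hs_card := congrArg Multiset.card hs_eq
    rw [Multiset.card_add] at ht_card hs_card
    omega
  have hrel_sub : Multiset.Rel r (t - s) (s - t) :=
    Multiset.rel_of_forall
      (fun a b ha hb =>
        hr a (Multiset.mem_of_le tsub_le_self ha) b (Multiset.mem_of_le hsub_le hb))
      hcard_sub
  have hrel_inter : Multiset.Rel r (t ∩ s) (t ∩ s) :=
    Multiset.rel_refl_of_refl_on fun a _ => refl a
  simpa only [ht_eq, hs_eq] using hrel_sub.add hrel_inter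

variable {M : Type*} [AddCommGroup M] [PartialOrder M] [IsOrderedAddMonoid M]

lemma sum_map_add_sum_map_le_of_monotone_sub [Preorder α] {f g : α → M}
    (hfg : Monotone (f - g)) {s t u v : Multiset α} (hadd : t + u = s + v)
    (hcard : t.card = s.card) (hle : ∀ a ∈ t, ∀ b ∈ u, a ≤ b) :
    (t.map f).sum + (u.map g).sum ≤ (s.map f).sum + (v.map g).sum := by
  have hrel : Multiset.Rel (· ≤ ·) t s :=
    rel_of_le_add_of_card_eq (hadd ▸ Multiset.le_add_right s v) hcard hle
  have hrel_map : Multiset.Rel (· ≤ ·) (t.map (f - g)) (s.map (f - g)) :=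
    Multiset.rel_map.2 (hrel.mono fun _ _ _ _ hab => hfg hab)
  have hsum_add (x y : Multiset α) :
      (x.map f).sum + (y.map g).sum = (x.map (f - g)).sum + ((x + y).map g).sum := by
    simp only [Pi.sub_apply, Multiset.sum_map_sub, Multiset.map_add, Multiset.sum_add,
      ← add_assoc, sub_add_cancel]
  rw [hsum_add, hsum_add, hadd]
  exact add_le_add_left (Multiset.sum_le_sum_of_rel_le hrel_map) _

end Exchange

lemma monotone_abs_sub_sub_abs_sub {G : Type*} [AddCommGroup G] [LinearOrder G]
    [IsOrderedAddMonoid G] {p q : G} (hpq : p ≤ q) :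
    Monotone ((fun x => |x - p|) - fun x => |x - q|) := by
  intro x y hxy
  simp only [Pi.sub_apply]
  grind [abs_cases]

lemma exists_forall_sum_map_dist_le {E : Type*} [PseudoMetricSpace E] [ProperSpace E] [Nonempty E]
    (s : Multiset E) :
    ∃ m, ∀ c, (s.map (dist · m)).sum ≤ (s.map (dist · c)).sum := by
  rcases s.empty_or_exists_mem with rfl | ⟨a, ha⟩
  · simp
  have hcont : Continuous fun c => (s.map (dist · c)).sum :=
    continuous_multiset_sum s fun x _ => continuous_const.dist continuous_id
  have hdist_le (c : E) : dist a c ≤ (s.map (dist · c)).sum :=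
    Multiset.single_le_sum (by simp) _ (Multiset.mem_map_of_mem _ ha)
  exact hcont.exists_forall_le
    (Filter.tendsto_atTop_mono hdist_le (tendsto_dist_left_cocompact_atTop a))

lemma isLeast_SAE (X : Multiset ℝ) :
    IsLeast (Set.range fun m : ℝ => (X.map fun x => |x - m|).sum) (SAE X) := by
  obtain ⟨m, hm⟩ := exists_forall_sum_map_dist_le X
  have hleast : IsLeast (Set.range fun c : ℝ => (X.map fun x => |x - c|).sum)
      (X.map fun x => |x - m|).sum :=
    ⟨⟨m, rfl⟩, Set.forall_mem_range.2 hm⟩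
  rwa [SAE, hleast.csInf_eq]

lemma SAE_add_SAE_le_of_forall_le {A B L R : Multiset ℝ} {p q : ℝ} (hpq : p ≤ q)
    (hadd : L + R = A + B) (hcard : L.card = A.card) (hle : ∀ a ∈ L, ∀ b ∈ R, a ≤ b) :
    SAE L + SAE R ≤ (A.map fun x => |x - p|).sum + (B.map fun x => |x - q|).sum :=
  calc
    SAE L + SAE R ≤ (L.map fun x => |x - p|).sum + (R.map fun x => |x - q|).sum :=
      add_le_add ((isLeast_SAE L).2 ⟨p, rfl⟩) ((isLeast_SAE R).2 ⟨q, rfl⟩)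
    _ ≤ (A.map fun x => |x - p|).sum + (B.map fun x => |x - q|).sum :=
      sum_map_add_sum_map_le_of_monotone_sub (monotone_abs_sub_sub_abs_sub hpq) hadd hcard hle

/-- The sum-of-absolute-error cost is 2-partition ordered minimizable. -/
theorem sae_two_partition_ordered_minimizable
    (Ω A B : Multiset ℝ) (hpart : A + B = Ω) (hA : A ≠ 0) (hB : B ≠ 0) :
    ∃ L R : Multiset ℝ, L + R = Ω ∧ PairwiseOrdered L R ∧
      ({Multiset.card L, Multiset.card R} : Multiset ℕ) =
        {Multiset.card A, Multiset.card B} ∧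
      SAE L + SAE R ≤ SAE A + SAE B := by
  obtain ⟨p, hp⟩ := (isLeast_SAE A).1
  obtain ⟨q, hq⟩ := (isLeast_SAE B).1
  wlog hpq : p ≤ q generalizing A B p q
  · rw [Multiset.pair_comm A.card, add_comm (SAE A)]
    exact this B A (add_comm B A ▸ hpart) hB hA q hq p hp (le_of_not_ge hpq)
  subst hpart
  obtain ⟨L, R, hadd, hcardL, hle⟩ := exists_add_eq_and_card_eq_and_forall_le (A + B)
    (Multiset.card_le_card (Multiset.le_add_right A B))
  have hcardR : R.card = B.card := by
    have hcard := congrArg Multiset.card hadd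
    rw [Multiset.card_add, Multiset.card_add] at hcard
    omega
  refine ⟨L, R, hadd, Or.inl hle, by rw [hcardL, hcardR], ?_⟩
  rw [← hp, ← hq]
  exact SAE_add_SAE_le_of_forall_le hpq hadd hcardL hle
end

section
/- The maximum-distance cost C_∞ is 2-partition ordered minimizable: for every finite multiset Ω of reals and every partition of Ω into two nonempty multisets A, B there exist pairwise ordered multisets L, R with L + R = Ω, whose multiset of cardinalities {|L|,|R|} equals {|A|,|B|}, and with C_∞(L) + C_∞(R) ≤ C_∞(A) + C_∞(B). -/
/-- Maximum of a (nonempty finite) multiset of reals. -/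
noncomputable def mmax (X : Multiset ℝ) : ℝ := sSup {y : ℝ | y ∈ X}

/-- Minimum of a (nonempty finite) multiset of reals. -/
noncomputable def mmin (X : Multiset ℝ) : ℝ := sInf {y : ℝ | y ∈ X}

/-- Maximum-distance cost: `C_∞(X) = max_{x∈X} |x − (max(X) + min(X))/2|`. -/
noncomputable def Cinf (X : Multiset ℝ) : ℝ :=
  sSup {y : ℝ | ∃ x ∈ X, y = |x - (mmax X + mmin X) / 2|}

/-!
`C_∞` is half the range. Suppose `min A ≤ min B`, and let `L` consist of the `|A|` smallest
elements of `Ω` and `R` of the others. Then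
`max R - min L ≤ max(max A, max B) - min A`, so it remains to bound `max L - min R` by
`min(max A, max B) - min B`. If `max A ≤ max B`, counting gives `max L ≤ max A` and
`min B ≤ min R`. Otherwise `B` lies within the range of `A`, and `max L ≤ min R` suffices.
-/

section OrderedSplit

variable {α : Type*} [LinearOrder α]

theorem exists_add_eq_card_eq_forall_le (X : Multiset α) {k : ℕ} (hk : k ≤ X.card) :
    ∃ L R : Multiset α, L + R = X ∧ L.card = k ∧ ∀ a ∈ L, ∀ b ∈ R, a ≤ b := by
  have hsorted : (X.sort.take k ++ X.sort.drop k).Pairwise (· ≤ ·) := by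
    rw [List.take_append_drop]
    exact X.pairwise_sort (· ≤ ·)
  refine ⟨X.sort.take k, X.sort.drop k, ?_, ?_, ?_⟩
  · rw [Multiset.coe_add, List.take_append_drop, Multiset.sort_eq]
  · simpa using hk
  · exact (List.pairwise_append.1 hsorted).2.2

theorem upperBounds_subset_of_forall_le_of_card_le {A L R : Multiset α} (hA : A ≤ L + R)
    (hLR : ∀ a ∈ L, ∀ b ∈ R, a ≤ b) (hcard : L.card ≤ A.card) :
    upperBounds {x | x ∈ A} ⊆ upperBounds {x | x ∈ L} := by
  intro u hu x hx
  by_contra! hux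
  have hA_lt : ∀ a ∈ A, a < x := fun a ha => (hu ha).trans_lt hux
  have hR_not_lt : ∀ b ∈ R, ¬b < x := fun b hb => (hLR x hx b hb).not_gt
  have hA_card_lt : A.card < L.card := calc
    A.card = A.countP (· < x) := (Multiset.countP_eq_card.2 hA_lt).symm
    _ ≤ (L + R).countP (· < x) := Multiset.countP_le_of_le _ hA
    _ = L.countP (· < x) := by
      rw [Multiset.countP_add, Multiset.countP_eq_zero.2 hR_not_lt, add_zero]
    _ < L.card := (Multiset.countP_le_card _ L).lt_of_ne fun h =>
      lt_irrefl x (Multiset.countP_eq_card.1 h x hx)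
  exact hcard.not_gt hA_card_lt

theorem lowerBounds_subset_of_forall_le_of_card_le {B L R : Multiset α} (hB : B ≤ L + R)
    (hLR : ∀ a ∈ L, ∀ b ∈ R, a ≤ b) (hcard : R.card ≤ B.card) :
    lowerBounds {x | x ∈ B} ⊆ lowerBounds {x | x ∈ R} :=
  upperBounds_subset_of_forall_le_of_card_le (α := αᵒᵈ) (hB.trans_eq (add_comm L R))
    (fun b hb a ha => hLR a ha b hb) hcard

end OrderedSplit

section Extrema

variable {A B X : Multiset ℝ}

theorem isGreatest_mmax (hX : X ≠ 0) : IsGreatest {x | x ∈ X} (mmax X) :=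
  ⟨Set.Nonempty.csSup_mem (Multiset.exists_mem_of_ne_zero hX) X.finite_toSet,
    fun _ hx => le_csSup X.finite_toSet.bddAbove hx⟩

theorem isLeast_mmin (hX : X ≠ 0) : IsLeast {x | x ∈ X} (mmin X) :=
  ⟨Set.Nonempty.csInf_mem (Multiset.exists_mem_of_ne_zero hX) X.finite_toSet,
    fun _ hx => csInf_le X.finite_toSet.bddBelow hx⟩

theorem mmin_le_mmax (hX : X ≠ 0) : mmin X ≤ mmax X :=
  (isLeast_mmin hX).2 (isGreatest_mmax hX).1

theorem mmax_add (hA : A ≠ 0) (hB : B ≠ 0) : mmax (A + B) = max (mmax A) (mmax B) := by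
  have hunion : {x | x ∈ A + B} = {x | x ∈ A} ∪ {x | x ∈ B} := Set.ext fun _ => Multiset.mem_add
  rw [mmax, hunion]
  exact ((isGreatest_mmax hA).union (isGreatest_mmax hB)).csSup_eq

theorem mmin_add (hA : A ≠ 0) (hB : B ≠ 0) : mmin (A + B) = min (mmin A) (mmin B) := by
  have hunion : {x | x ∈ A + B} = {x | x ∈ A} ∪ {x | x ∈ B} := Set.ext fun _ => Multiset.mem_add
  rw [mmin, hunion]
  exact ((isLeast_mmin hA).union (isLeast_mmin hB)).csInf_eq

theorem Cinf_eq_half_range (hX : X ≠ 0) : Cinf X = (mmax X - mmin X) / 2 := by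
  refine IsGreatest.csSup_eq ⟨⟨mmax X, (isGreatest_mmax hX).1, ?_⟩, ?_⟩
  · rw [abs_of_nonneg] <;> linarith [mmin_le_mmax hX]
  · rintro _ ⟨x, hx, rfl⟩
    have hmin : mmin X ≤ x := (isLeast_mmin hX).2 hx
    have hmax : x ≤ mmax X := (isGreatest_mmax hX).2 hx
    rw [abs_le]
    constructor <;> linarith

end Extrema

section OrderedPartition

variable {A B L R : Multiset ℝ}

theorem mmax_sub_mmin_le_of_forall_le (hA : A ≠ 0) (hB : B ≠ 0) (hL : L ≠ 0) (hR : R ≠ 0)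
    (hsum : L + R = A + B) (hLR : ∀ a ∈ L, ∀ b ∈ R, a ≤ b)
    (hcardL : L.card = A.card) (hcardR : R.card = B.card) :
    mmax L - mmin R ≤ min (mmax A) (mmax B) - mmin B := by
  rcases le_total (mmax A) (mmax B) with hmax | hmax
  · have hLA : mmax L ≤ mmax A :=
      upperBounds_subset_of_forall_le_of_card_le (hsum ▸ Multiset.le_add_right A B) hLR hcardL.le
        (isGreatest_mmax hA).2 (isGreatest_mmax hL).1
    have hBR : mmin B ≤ mmin R :=
      lowerBounds_subset_of_forall_le_of_card_le (hsum ▸ Multiset.le_add_left B A) hLR hcardR.le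
        (isLeast_mmin hB).2 (isLeast_mmin hR).1
    rw [min_eq_left hmax]
    exact sub_le_sub hLA hBR
  · rw [min_eq_right hmax]
    calc
      mmax L - mmin R ≤ 0 :=
        sub_nonpos.2 (hLR _ (isGreatest_mmax hL).1 _ (isLeast_mmin hR).1)
      _ ≤ mmax B - mmin B := sub_nonneg.2 (mmin_le_mmax hB)

theorem Cinf_add_Cinf_le_of_forall_le (hA : A ≠ 0) (hB : B ≠ 0) (hmin : mmin A ≤ mmin B)
    (hsum : L + R = A + B) (hLR : ∀ a ∈ L, ∀ b ∈ R, a ≤ b)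
    (hcardL : L.card = A.card) (hcardR : R.card = B.card) :
    Cinf L + Cinf R ≤ Cinf A + Cinf B := by
  have hL : L ≠ 0 := Multiset.card_pos.1 (hcardL ▸ Multiset.card_pos.2 hA)
  have hR : R ≠ 0 := Multiset.card_pos.1 (hcardR ▸ Multiset.card_pos.2 hB)
  have houter_max : mmax R ≤ max (mmax A) (mmax B) := by
    rw [← mmax_add hA hB, ← hsum, mmax_add hL hR]
    exact le_max_right _ _
  have houter_min : mmin A ≤ mmin L := by
    rw [← min_eq_left hmin, ← mmin_add hA hB, ← hsum, mmin_add hL hR]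
    exact min_le_left _ _
  have hinner : mmax L - mmin R ≤ min (mmax A) (mmax B) - mmin B :=
    mmax_sub_mmin_le_of_forall_le hA hB hL hR hsum hLR hcardL hcardR
  rw [Cinf_eq_half_range hA, Cinf_eq_half_range hB, Cinf_eq_half_range hL, Cinf_eq_half_range hR]
  linarith [max_add_min (mmax A) (mmax B)]

end OrderedPartition

/-- The maximum-distance cost is 2-partition ordered minimizable. -/
theorem cinf_two_partition_ordered_minimizable
    (Ω A B : Multiset ℝ) (hpart : A + B = Ω) (hA : A ≠ 0) (hB : B ≠ 0) :
    ∃ L R : Multiset ℝ, L + R = Ω ∧ PairwiseOrdered L R ∧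
      ({Multiset.card L, Multiset.card R} : Multiset ℕ) =
        {Multiset.card A, Multiset.card B} ∧
      Cinf L + Cinf R ≤ Cinf A + Cinf B := by
  subst hpart
  wlog hmin : mmin A ≤ mmin B generalizing A B
  · rw [add_comm A B, Multiset.pair_comm A.card, add_comm (Cinf A)]
    exact this B A hB hA (le_of_not_ge hmin)
  obtain ⟨L, R, hsum, hcardL, hLR⟩ :=
    exists_add_eq_card_eq_forall_le (A + B) (k := A.card) (by simp)
  have hcardR : R.card = B.card := by
    have hcard := congrArg Multiset.card hsum
    rwa [Multiset.card_add, Multiset.card_add, hcardL, Nat.add_left_cancel_iff] at hcard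
  exact ⟨L, R, hsum, Or.inl hLR, by rw [hcardL, hcardR],
    Cinf_add_Cinf_le_of_forall_le hA hB hmin hsum hLR hcardL hcardR⟩
end

section
/- The sum-of-squares-error cost is concave on sorted data: for reals x₁ ≤ x₂ ≤ … ≤ x_n and all integers 0 ≤ a < b < c < d ≤ n, SSE(a,c) + SSE(b,d) ≤ SSE(a,d) + SSE(b,c). -/
/-- Sum of squares error: `SSE(X) = Σ_{x∈X} (x − μ(X))²` with `μ(X)` the mean of `X`. -/
noncomputable def SSE (X : Multiset ℝ) : ℝ :=
  (X.map (fun x => (x - X.sum / (Multiset.card X : ℝ)) ^ 2)).sum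

/-- The multiset `{x_{i+1}, …, x_j}` of the data points with indices in `(i, j]`. -/
def intervalMS (x : ℕ → ℝ) (i j : ℕ) : Multiset ℝ := (Finset.Ioc i j).val.map x

/-!
Merging two clusters `X` and `Y` increases the total error by Ward's merge cost
`|X| |Y| / (|X| + |Y|) * (μ(Y) - μ(X))²`. Let `X`, `Y`, `Z` be the blocks of data with indices in
`(a, b]`, `(b, c]`, `(c, d]`. The quadrangle inequality says that merging `X` with `Y` costs at most
as much as merging `X` with `Y + Z`. This holds because passing from `Y` to `Y + Z` enlarges the
second cluster and moves its mean away from `μ(X)`.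
-/

/-- The mean `μ(X)` of a finite multiset of reals; the empty multiset has mean `0`. -/
noncomputable def mean (X : Multiset ℝ) : ℝ := X.sum / X.card

lemma card_mul_mean (X : Multiset ℝ) : X.card * mean X = X.sum := by
  rcases eq_or_ne X 0 with rfl | hX
  · simp
  · exact mul_div_cancel₀ _ (by simpa using hX)

lemma card_add_card_mul_mean_add (X Y : Multiset ℝ) :
    ((X.card : ℝ) + Y.card) * mean (X + Y) = X.card * mean X + Y.card * mean Y := by
  simpa only [Multiset.card_add, Nat.cast_add, Multiset.sum_add, card_mul_mean] using
    card_mul_mean (X + Y)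

lemma mean_le_of_forall_le {X : Multiset ℝ} {t : ℝ} (hX : X ≠ 0) (h : ∀ x ∈ X, x ≤ t) :
    mean X ≤ t := by
  have hcard : (0 : ℝ) < X.card := by exact_mod_cast Multiset.card_pos.2 hX
  rw [mean, div_le_iff₀' hcard, ← nsmul_eq_mul]
  exact Multiset.sum_le_card_nsmul X t h

lemma le_mean_of_forall_le {X : Multiset ℝ} {t : ℝ} (hX : X ≠ 0) (h : ∀ x ∈ X, t ≤ x) :
    t ≤ mean X := by
  have hcard : (0 : ℝ) < X.card := by exact_mod_cast Multiset.card_pos.2 hX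
  rw [mean, le_div_iff₀' hcard, ← nsmul_eq_mul]
  exact Multiset.card_nsmul_le_sum h

lemma mean_le_mean_of_forall_le {X Y : Multiset ℝ} (hX : X ≠ 0) (hY : Y ≠ 0)
    (h : ∀ x ∈ X, ∀ y ∈ Y, x ≤ y) : mean X ≤ mean Y :=
  mean_le_of_forall_le hX fun x hx ↦ le_mean_of_forall_le hY (h x hx)

lemma mean_le_mean_add {X Y : Multiset ℝ} (h : mean X ≤ mean Y) : mean X ≤ mean (X + Y) := by
  rcases eq_or_ne X 0 with rfl | hX
  · simpa only [zero_add] using h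
  have hcard : (0 : ℝ) < X.card + Y.card := by
    exact_mod_cast Nat.add_pos_left (Multiset.card_pos.2 hX) _
  refine le_of_mul_le_mul_left ?_ hcard
  calc ((X.card : ℝ) + Y.card) * mean X
      = X.card * mean X + Y.card * mean X := add_mul _ _ _
    _ ≤ X.card * mean X + Y.card * mean Y := by gcongr
    _ = (X.card + Y.card) * mean (X + Y) := (card_add_card_mul_mean_add X Y).symm

lemma sum_map_sub_sq (X : Multiset ℝ) (t : ℝ) :
    (X.map fun x ↦ (x - t) ^ 2).sum =
      (X.map fun x ↦ x ^ 2).sum - 2 * t * X.sum + X.card * t ^ 2 := by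
  induction X using Multiset.induction_on with
  | empty => simp
  | cons x X ih =>
    simp only [Multiset.map_cons, Multiset.sum_cons, Multiset.card_cons, ih]
    push_cast
    ring

lemma sum_map_sub_sq_eq_sse_add (X : Multiset ℝ) (t : ℝ) :
    (X.map fun x ↦ (x - t) ^ 2).sum = SSE X + X.card * (mean X - t) ^ 2 := by
  have hsse : SSE X = (X.map fun x ↦ (x - mean X) ^ 2).sum := rfl
  rw [hsse, sum_map_sub_sq, sum_map_sub_sq, ← card_mul_mean X]
  ring

lemma sse_add (X Y : Multiset ℝ) :
    SSE (X + Y) = SSE X + SSE Y +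
      X.card * Y.card / (X.card + Y.card) * (mean Y - mean X) ^ 2 := by
  have hsplit : SSE (X + Y) = SSE X + X.card * (mean X - mean (X + Y)) ^ 2 +
      (SSE Y + Y.card * (mean Y - mean (X + Y)) ^ 2) := by
    rw [← sum_map_sub_sq_eq_sse_add, ← sum_map_sub_sq_eq_sse_add, ← Multiset.sum_add,
      ← Multiset.map_add]
    rfl
  rcases eq_or_ne (X + Y) 0 with hXY | hXY
  · obtain ⟨rfl, rfl⟩ := add_eq_zero.1 hXY
    simp [SSE]
  have hcard : (X.card : ℝ) + Y.card ≠ 0 := by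
    exact_mod_cast (Multiset.card_add X Y ▸ Multiset.card_pos.2 hXY).ne'
  have hmean : mean (X + Y) = (X.card * mean X + Y.card * mean Y) / (X.card + Y.card) :=
    eq_div_of_mul_eq hcard (by rw [mul_comm, card_add_card_mul_mean_add])
  rw [hsplit, hmean]
  field_simp
  ring

lemma mul_div_add_le_mul_div_add {K : Type*} [Field K] [LinearOrder K] [IsStrictOrderedRing K]
    {p q r : K} (hp : 0 ≤ p) (hq : 0 ≤ q) (hqr : q ≤ r) :
    p * q / (p + q) ≤ p * r / (p + r) := by
  rcases hp.eq_or_lt with rfl | hp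
  · simp only [zero_mul, zero_div, le_refl]
  rw [div_le_div_iff₀ (by positivity) (add_pos_of_pos_of_nonneg hp (hq.trans hqr))]
  calc p * q * (p + r) = p * p * q + p * q * r := by ring
    _ ≤ p * p * r + p * q * r := by gcongr
    _ = p * r * (p + q) := by ring

theorem sse_concave_general {X Y Z : Multiset ℝ} (hXY : mean X ≤ mean Y) (hYZ : mean Y ≤ mean Z) :
    SSE (X + Y) + SSE (Y + Z) ≤ SSE (X + Y + Z) + SSE Y := by
  have hweight : (X.card : ℝ) * Y.card / (X.card + Y.card) ≤
      X.card * (Y + Z).card / (X.card + (Y + Z).card) :=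
    mul_div_add_le_mul_div_add (by positivity) (by positivity) (by simp)
  have hdist : (mean Y - mean X) ^ 2 ≤ (mean (Y + Z) - mean X) ^ 2 :=
    pow_le_pow_left₀ (sub_nonneg.2 hXY) (sub_le_sub_right (mean_le_mean_add hYZ) _) 2
  have hcost := mul_le_mul hweight hdist (by positivity) (by positivity)
  rw [add_assoc X Y Z, sse_add X Y, sse_add X (Y + Z)]
  linarith

lemma intervalMS_add_intervalMS (x : ℕ → ℝ) {i j k : ℕ} (hij : i ≤ j) (hjk : j ≤ k) :
    intervalMS x i j + intervalMS x j k = intervalMS x i k := by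
  rw [intervalMS, intervalMS, intervalMS, ← Multiset.map_add,
    ← Finset.Ioc_union_Ioc_eq_Ioc hij hjk,
    ← Finset.disjUnion_eq_union _ _ (Finset.Ioc_disjoint_Ioc_of_le le_rfl), Finset.disjUnion_val]

lemma intervalMS_ne_zero (x : ℕ → ℝ) {i j : ℕ} (hij : i < j) : intervalMS x i j ≠ 0 := by
  simpa [intervalMS] using hij

lemma mean_intervalMS_le_mean_intervalMS {x : ℕ → ℝ} {i j k : ℕ} (hij : i < j) (hjk : j < k)
    (hx : MonotoneOn x (Set.Ioc i k)) :
    mean (intervalMS x i j) ≤ mean (intervalMS x j k) := by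
  refine mean_le_mean_of_forall_le (intervalMS_ne_zero x hij) (intervalMS_ne_zero x hjk) ?_
  simp only [intervalMS, Multiset.mem_map, Finset.mem_val, Finset.mem_Ioc]
  rintro _ ⟨l, hl, rfl⟩ _ ⟨m, hm, rfl⟩
  exact hx ⟨hl.1, hl.2.trans hjk.le⟩ ⟨hij.trans hm.1, hm.2⟩ (hl.2.trans hm.1.le)

/-- The sum-of-squares-error cost is concave (satisfies the quadrangle inequality)
on sorted data. -/
theorem sse_concave (n : ℕ) (x : ℕ → ℝ)
    (hsorted : ∀ l m : ℕ, 1 ≤ l → l ≤ m → m ≤ n → x l ≤ x m)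
    (a b c d : ℕ) (hab : a < b) (hbc : b < c) (hcd : c < d) (hdn : d ≤ n) :
    SSE (intervalMS x a c) + SSE (intervalMS x b d) ≤
      SSE (intervalMS x a d) + SSE (intervalMS x b c) := by
  have hmono : MonotoneOn x (Set.Ioc a d) := fun l hl m hm hlm ↦
    hsorted l m (Nat.one_le_of_lt hl.1) hlm (hm.2.trans hdn)
  have habc := mean_intervalMS_le_mean_intervalMS hab hbc
    (hmono.mono (Set.Ioc_subset_Ioc_right hcd.le))
  have hbcd := mean_intervalMS_le_mean_intervalMS hbc hcd
    (hmono.mono (Set.Ioc_subset_Ioc_left hab.le))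
  simpa only [intervalMS_add_intervalMS x hab.le hbc.le, intervalMS_add_intervalMS x hbc.le hcd.le,
    intervalMS_add_intervalMS x (hab.trans hbc).le hcd.le] using sse_concave_general habc hbcd
end
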